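/- Let X ∈ {E,A}. The following inclusions fail: there is a disjunctive logic program P with Cnˣ_o(τ^∨_EH(P)) ⊄ Cnˣ_o(τ^∨_HP(P)); there is a safe normal logic program P with Cnˣ_o(τ^∨_EB(P)) ⊄ Cnˣ_o(τ_HP(P)); and there is a safe normal logic program P with Cnˣ_o(τ_HP(P)) ⊄ Cnˣ_o(τ^∨_EB(P)). -/

import Mathlib

set_option autoImplicit false

/-! # First-order autoepistemic logic (FO-AEL): syntax -/

structure Sig : Type 1 where
  Func : Type
  Pred : Type
  arF : Func → ℕ
  arP : Pred → ℕ

inductive Term (S : Sig) : Type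
  | var : ℕ → Term S
  | func : (f : S.Func) → (Fin (S.arF f) → Term S) → Term S

inductive Formula (S : Sig) : Type
  | atom : (p : S.Pred) → (Fin (S.arP p) → Term S) → Formula S
  | eq : Term S → Term S → Formula S
  | not : Formula S → Formula S
  | and : Formula S → Formula S → Formula S
  | ex : ℕ → Formula S → Formula S
  | box : Formula S → Formula S

namespace Term

variable {S : Sig}

/-- A term is ground if it contains no variables; ground terms are the *names*. -/
def isGround : Term S → Prop
  | var _ => False
  | func _ ts => ∀ i, (ts i).isGround

def hasVar (x : ℕ) : Term S → Prop
  | var y => y = x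
  | func _ ts => ∃ i, (ts i).hasVar x

/-- Application of a partial (name) substitution to a term. -/
def subst (β : ℕ → Option (Term S)) : Term S → Term S
  | var x => (β x).getD (var x)
  | func f ts => func f (fun i => (ts i).subst β)

/-- The function symbols occurring in a term. -/
def funcs : Term S → Set S.Func
  | var _ => ∅
  | func f ts => insert f (⋃ i, (ts i).funcs)

/-- `t` is a name (ground term) over the set `F` of function symbols. -/
def isNameOf (F : Set S.Func) : Term S → Prop
  | var _ => False
  | func f ts => f ∈ F ∧ ∀ i, (ts i).isNameOf F

end Term

namespace Formula

variable {S : Sig}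

/-- A formula is objective if it is 𝖫-free. -/
def isObjective : Formula S → Prop
  | atom _ _ => True
  | eq _ _ => True
  | not φ => φ.isObjective
  | and φ ψ => φ.isObjective ∧ ψ.isObjective
  | ex _ φ => φ.isObjective
  | box _ => False

def isGround : Formula S → Prop
  | atom _ ts => ∀ i, (ts i).isGround
  | eq t₁ t₂ => t₁.isGround ∧ t₂.isGround
  | not φ => φ.isGround
  | and φ ψ => φ.isGround ∧ ψ.isGround
  | ex _ _ => False
  | box φ => φ.isGround

def isAtomic : Formula S → Prop
  | atom _ _ => True
  | eq _ _ => True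
  | not _ => False
  | and _ _ => False
  | ex _ _ => False
  | box _ => False

/-- The modal operator 𝖫 occurs only applied to (objective) atomic formulas. -/
def boxAtomic : Formula S → Prop
  | atom _ _ => True
  | eq _ _ => True
  | not φ => φ.boxAtomic
  | and φ ψ => φ.boxAtomic ∧ ψ.boxAtomic
  | ex _ φ => φ.boxAtomic
  | box φ => φ.isAtomic

/-- Propositional formulas: built from 0-ary predicates only. -/
def isPropositional : Formula S → Prop
  | atom p _ => S.arP p = 0
  | eq _ _ => False
  | not φ => φ.isPropositional
  | and φ ψ => φ.isPropositional ∧ ψ.isPropositional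
  | ex _ _ => False
  | box _ => False

def freeIn (x : ℕ) : Formula S → Prop
  | atom _ ts => ∃ i, (ts i).hasVar x
  | eq t₁ t₂ => t₁.hasVar x ∨ t₂.hasVar x
  | not φ => φ.freeIn x
  | and φ ψ => φ.freeIn x ∨ ψ.freeIn x
  | ex y φ => x ≠ y ∧ φ.freeIn x
  | box φ => φ.freeIn x

/-- A formula is closed (a sentence) if it has no free variables. -/
def closed (φ : Formula S) : Prop := ∀ x, ¬ φ.freeIn x

/-- Capture-avoiding application of a partial name substitution (values are ground). -/
def subst (β : ℕ → Option (Term S)) : Formula S → Formula S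
  | atom p ts => atom p (fun i => (ts i).subst β)
  | eq t₁ t₂ => eq (t₁.subst β) (t₂.subst β)
  | not φ => not (φ.subst β)
  | and φ ψ => and (φ.subst β) (ψ.subst β)
  | ex y φ => ex y (φ.subst (fun z => if z = y then none else β z))
  | box φ => box (φ.subst β)

def funcs : Formula S → Set S.Func
  | atom _ ts => ⋃ i, (ts i).funcs
  | eq t₁ t₂ => t₁.funcs ∪ t₂.funcs
  | not φ => φ.funcs
  | and φ ψ => φ.funcs ∪ ψ.funcs
  | ex _ φ => φ.funcs
  | box φ => φ.funcs

def preds : Formula S → Set S.Pred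
  | atom p _ => {p}
  | eq _ _ => ∅
  | not φ => φ.preds
  | and φ ψ => φ.preds ∪ ψ.preds
  | ex _ φ => φ.preds
  | box φ => φ.preds

/-- `φ ∨ ψ` as an abbreviation: `¬(¬φ ∧ ¬ψ)`. -/
def or (φ ψ : Formula S) : Formula S := not (and (not φ) (not ψ))

/-- `φ ⊃ ψ` as an abbreviation: `¬(φ ∧ ¬ψ)`. -/
def imp (φ ψ : Formula S) : Formula S := not (and φ (not ψ))

/-- `∀x.φ` as an abbreviation: `¬∃x.¬φ`. -/
def all (x : ℕ) (φ : Formula S) : Formula S := not (ex x (not φ))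

end Formula

/-! ## Semantics -/

structure Interp (S : Sig) where
  U : Type
  nonempty : Nonempty U
  interpF : (f : S.Func) → (Fin (S.arF f) → U) → U
  interpP : (p : S.Pred) → (Fin (S.arP p) → U) → Prop

noncomputable def Interp.dflt {S : Sig} (w : Interp S) : w.U := Classical.choice w.nonempty

def Term.eval {S : Sig} (w : Interp S) (B : ℕ → w.U) : Term S → w.U
  | Term.var x => B x
  | Term.func f ts => w.interpF f (fun i => (ts i).eval w B)

/-- Evaluation of a ground term (the assignment is irrelevant). -/
noncomputable def Term.evalG {S : Sig} (w : Interp S) (t : Term S) : w.U :=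
  t.eval w (fun _ => w.dflt)

/-- An individual is named if some name (ground term) denotes it. -/
def IsNamed {S : Sig} (w : Interp S) (k : w.U) : Prop :=
  ∃ t : Term S, t.isGround ∧ Term.evalG w t = k

/-- A name substitution `β` is associated with the variable assignment `B`:
its domain is exactly the set of variables whose `B`-value is named, and
it assigns to each such variable a name denoting its `B`-value. -/
def Assoc {S : Sig} (w : Interp S) (B : ℕ → w.U) (β : ℕ → Option (Term S)) : Prop :=
  ∀ x : ℕ,
    (IsNamed w (B x) → (β x).isSome) ∧
    (∀ t : Term S, β x = some t → t.isGround ∧ Term.evalG w t = B x)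

/-- The two semantics: any-name (E) and all-name (A). -/
inductive Sem : Type
  | any
  | all

/-- Satisfaction of a formula in an autoepistemic interpretation `⟨w,Γ⟩`
under a variable assignment, for the any-name (E) resp. all-name (A) semantics. -/
def Sat {S : Sig} (X : Sem) (w : Interp S) (Γ : Set (Formula S)) :
    Formula S → (ℕ → w.U) → Prop
  | Formula.atom p ts, B => w.interpP p (fun i => (ts i).eval w B)
  | Formula.eq t₁ t₂, B => t₁.eval w B = t₂.eval w B
  | Formula.not φ, B => ¬ Sat X w Γ φ B
  | Formula.and φ ψ, B => Sat X w Γ φ B ∧ Sat X w Γ ψ B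
  | Formula.ex x φ, B => ∃ u : w.U, Sat X w Γ φ (Function.update B x u)
  | Formula.box φ, B =>
      match X with
      | Sem.any => ∃ β, Assoc w B β ∧ (φ.subst β).closed ∧ φ.subst β ∈ Γ
      | Sem.all => ∀ β, Assoc w B β → (φ.subst β).closed ∧ φ.subst β ∈ Γ

def ModelsF {S : Sig} (X : Sem) (w : Interp S) (Γ : Set (Formula S)) (φ : Formula S) : Prop :=
  ∀ B : ℕ → w.U, Sat X w Γ φ B

def ModelsT {S : Sig} (X : Sem) (w : Interp S) (Γ Φ : Set (Formula S)) : Prop :=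
  ∀ φ ∈ Φ, ModelsF X w Γ φ

/-- `Φ ⊨ˣ_Γ φ`. -/
def Entails {S : Sig} (X : Sem) (Φ Γ : Set (Formula S)) (φ : Formula S) : Prop :=
  ∀ w : Interp S, ModelsT X w Γ Φ → ModelsF X w Γ φ

/-- The standard names assumption: all names are interpreted distinctly
and every individual is named. -/
def SNA {S : Sig} (w : Interp S) : Prop :=
  (∀ t₁ t₂ : Term S, t₁.isGround → t₂.isGround → Term.evalG w t₁ = Term.evalG w t₂ → t₁ = t₂) ∧
  (∀ k : w.U, IsNamed w k)

/-- Entailment restricted to interpretations satisfying the standard names assumption. -/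
def EntailsSN {S : Sig} (X : Sem) (Φ Γ : Set (Formula S)) (φ : Formula S) : Prop :=
  ∀ w : Interp S, SNA w → ModelsT X w Γ Φ → ModelsF X w Γ φ

/-- `T` is a stableˣ expansion of `Φ`. -/
def StableExp {S : Sig} (X : Sem) (Φ T : Set (Formula S)) : Prop :=
  T = {φ | Entails X Φ T φ}

def objOf {S : Sig} (T : Set (Formula S)) : Set (Formula S) :=
  {φ ∈ T | φ.isObjective}

def ogOf {S : Sig} (T : Set (Formula S)) : Set (Formula S) :=
  {φ ∈ T | φ.isObjective ∧ φ.isGround}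

def ogaOf {S : Sig} (T : Set (Formula S)) : Set (Formula S) :=
  {φ ∈ T | φ.isObjective ∧ φ.isGround ∧ φ.isAtomic}

def Consistent {S : Sig} (T : Set (Formula S)) : Prop := T ≠ Set.univ

/-- `Φ₁ ≡ˣ Φ₂`: same stableˣ expansions. -/
def ExpEquiv {S : Sig} (X : Sem) (Φ₁ Φ₂ : Set (Formula S)) : Prop :=
  ∀ T, StableExp X Φ₁ T ↔ StableExp X Φ₂ T

/-- `Φ₁ ≡ˣ_γ Φ₂` for a selector `sel` (e.g. `ogaOf`): the stableˣ expansions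
correspond with respect to `sel`. -/
def ExpEquivSel {S : Sig} (X : Sem) (sel : Set (Formula S) → Set (Formula S))
    (Φ₁ Φ₂ : Set (Formula S)) : Prop :=
  (∀ T, StableExp X Φ₁ T → ∃ T', StableExp X Φ₂ T' ∧ sel T = sel T') ∧
  (∀ T', StableExp X Φ₂ T' → ∃ T, StableExp X Φ₁ T ∧ sel T = sel T')

/-- Autoepistemicˣ consequences of `Φ`. -/
def Cn {S : Sig} (X : Sem) (Φ : Set (Formula S)) : Set (Formula S) :=
  {φ | ∀ T, StableExp X Φ T → φ ∈ T}

def CnO {S : Sig} (X : Sem) (Φ : Set (Formula S)) : Set (Formula S) :=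
  {φ ∈ Cn X Φ | φ.isObjective}

def CnOg {S : Sig} (X : Sem) (Φ : Set (Formula S)) : Set (Formula S) :=
  {φ ∈ Cn X Φ | φ.isObjective ∧ φ.isGround}

/-! ## Logic programs -/

structure PAtom (S : Sig) where
  p : S.Pred
  args : Fin (S.arP p) → Term S

namespace PAtom

variable {S : Sig}

def toFormula (a : PAtom S) : Formula S := Formula.atom a.p a.args

def isGround (a : PAtom S) : Prop := ∀ i, (a.args i).isGround

def hasVar (x : ℕ) (a : PAtom S) : Prop := ∃ i, (a.args i).hasVar x

def substA (σ : ℕ → Term S) (a : PAtom S) : PAtom S :=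
  ⟨a.p, fun i => (a.args i).subst (fun x => some (σ x))⟩

def funcs (a : PAtom S) : Set S.Func := ⋃ i, (a.args i).funcs

end PAtom

/-- A (disjunctive) rule `h₁ | … | h_l ← b₁,…,b_m, not c₁,…,not c_n`,
together with a list of the variables occurring in it. -/
structure Rule (S : Sig) where
  head : List (PAtom S)
  pos : List (PAtom S)
  neg : List (PAtom S)
  vars : List ℕ

namespace Rule

variable {S : Sig}

def atoms (r : Rule S) : List (PAtom S) := r.head ++ r.pos ++ r.neg

def hasVar (x : ℕ) (r : Rule S) : Prop := ∃ a ∈ r.atoms, PAtom.hasVar x a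

/-- Well-formedness: at least one head atom, and `vars` lists all variables of the rule. -/
def wf (r : Rule S) : Prop := r.head ≠ [] ∧ ∀ x, r.hasVar x → x ∈ r.vars

def isNormal (r : Rule S) : Prop := r.head.length = 1

def isGround (r : Rule S) : Prop := (∀ a ∈ r.atoms, a.isGround) ∧ r.vars = []

def isSafe (r : Rule S) : Prop := ∀ x, r.hasVar x → ∃ a ∈ r.pos, PAtom.hasVar x a

def isPositive (r : Rule S) : Prop := r.neg = []

def applySubst (σ : ℕ → Term S) (r : Rule S) : Rule S :=
  ⟨r.head.map (PAtom.substA σ), r.pos.map (PAtom.substA σ), r.neg.map (PAtom.substA σ), []⟩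

end Rule

abbrev Program (S : Sig) := Set (Rule S)

def progWf {S : Sig} (P : Program S) : Prop := ∀ r ∈ P, r.wf
def progNormal {S : Sig} (P : Program S) : Prop := ∀ r ∈ P, r.isNormal
def progGround {S : Sig} (P : Program S) : Prop := ∀ r ∈ P, r.isGround
def progSafe {S : Sig} (P : Program S) : Prop := ∀ r ∈ P, r.isSafe
def progPositive {S : Sig} (P : Program S) : Prop := ∀ r ∈ P, r.isPositive

/-- The function symbols occurring in `P` (part of the signature `Σ_P`). -/
def progFuncs {S : Sig} (P : Program S) : Set S.Func :=
  {f | ∃ r ∈ P, ∃ a ∈ r.atoms, f ∈ a.funcs}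

/-- The predicate symbols occurring in `P` (part of the signature `Σ_P`). -/
def progPreds {S : Sig} (P : Program S) : Set S.Pred :=
  {q | ∃ r ∈ P, ∃ a ∈ r.atoms, a.p = q}

/-- The ambient signature is exactly the signature `Σ_P` of `P`. -/
def fullSig {S : Sig} (P : Program S) : Prop :=
  (∀ f : S.Func, f ∈ progFuncs P) ∧ (∀ q : S.Pred, q ∈ progPreds P)

/-- Standing assumption: `Σ_P` contains a 0-ary function symbol whenever it
has a predicate symbol of arity greater than 0. -/
def goodSig {S : Sig} (P : Program S) : Prop :=
  (∃ q ∈ progPreds P, 0 < S.arP q) → ∃ f ∈ progFuncs P, S.arF f = 0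

/-! ## Embeddings of logic programs into FO-AEL -/

def andAll {S : Sig} : Formula S → List (Formula S) → Formula S
  | φ, [] => φ
  | φ, ψ :: rest => andAll (Formula.and φ ψ) rest

def orAll {S : Sig} : Formula S → List (Formula S) → Formula S
  | φ, [] => φ
  | φ, ψ :: rest => orAll (Formula.or φ ψ) rest

/-- `impOf ants c` is `⋀ ants ⊃ c` (just `c` if there are no antecedents). -/
def impOf {S : Sig} : List (Formula S) → Formula S → Formula S
  | [], c => c
  | a :: rest, c => Formula.imp (andAll a rest) c

/-- Disjunction of a nonempty list (junk value on the empty list,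
which is excluded by rule well-formedness). -/
def disjOf {S : Sig} : List (Formula S) → Formula S
  | [] => Formula.eq (Term.var 0) (Term.var 0)
  | h :: rest => orAll h rest

/-- Universal uclosure over the listed variables. -/
def uclosure {S : Sig} (vs : List ℕ) (φ : Formula S) : Formula S :=
  vs.foldr Formula.all φ

def bodyHP {S : Sig} (r : Rule S) : List (Formula S) :=
  r.pos.map PAtom.toFormula ++ r.neg.map (fun c => Formula.not (Formula.box c.toFormula))

def bodyE {S : Sig} (r : Rule S) : List (Formula S) :=
  r.pos.map (fun b => Formula.and b.toFormula (Formula.box b.toFormula)) ++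
    r.neg.map (fun c => Formula.not (Formula.box c.toFormula))

/-- `τ_HP(r)` resp. `τ^∨_HP(r)`. -/
def embHP {S : Sig} (r : Rule S) : Formula S :=
  uclosure r.vars (impOf (bodyHP r) (disjOf (r.head.map PAtom.toFormula)))

/-- `τ_EB(r)` resp. `τ^∨_EB(r)`. -/
def embEB {S : Sig} (r : Rule S) : Formula S :=
  uclosure r.vars (impOf (bodyE r) (disjOf (r.head.map PAtom.toFormula)))

/-- `τ_EH(r)` resp. `τ^∨_EH(r)`. -/
def embEH {S : Sig} (r : Rule S) : Formula S :=
  uclosure r.vars (impOf (bodyE r)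
    (disjOf (r.head.map (fun h => Formula.and h.toFormula (Formula.box h.toFormula)))))

/-- The unique-names axioms `¬𝖫(t₁=t₂) ⊃ t₁≠t₂` for distinct names of `Σ_P`. -/
def UNAax {S : Sig} (P : Program S) : Set (Formula S) :=
  {φ | ∃ t₁ t₂ : Term S, t₁.isNameOf (progFuncs P) ∧ t₂.isNameOf (progFuncs P) ∧ t₁ ≠ t₂ ∧
        φ = Formula.imp (Formula.not (Formula.box (Formula.eq t₁ t₂)))
              (Formula.not (Formula.eq t₁ t₂))}

/-- The positive introspection axioms `α ⊃ 𝖫α` for objective ground atoms of `Σ_P`. -/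
def PIAax {S : Sig} (P : Program S) : Set (Formula S) :=
  {φ | ∃ a : PAtom S, a.p ∈ progPreds P ∧ (∀ i, (a.args i).isNameOf (progFuncs P)) ∧
        φ = Formula.imp a.toFormula (Formula.box a.toFormula)}

def ruleEmb {S : Sig} (emb : Rule S → Formula S) (P : Program S) : Set (Formula S) :=
  {φ | ∃ r ∈ P, φ = emb r}

def tauHP {S : Sig} (P : Program S) : Set (Formula S) := ruleEmb embHP P ∪ UNAax P
def tauEB {S : Sig} (P : Program S) : Set (Formula S) := ruleEmb embEB P ∪ UNAax P
def tauEH {S : Sig} (P : Program S) : Set (Formula S) := ruleEmb embEH P ∪ UNAax P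
def tauHPv {S : Sig} (P : Program S) : Set (Formula S) := ruleEmb embHP P ∪ PIAax P ∪ UNAax P
def tauEBv {S : Sig} (P : Program S) : Set (Formula S) := ruleEmb embEB P ∪ PIAax P ∪ UNAax P
def tauEHv {S : Sig} (P : Program S) : Set (Formula S) := ruleEmb embEH P ∪ UNAax P
def tauHPminus {S : Sig} (P : Program S) : Set (Formula S) := ruleEmb embHP P
def tauEHvminus {S : Sig} (P : Program S) : Set (Formula S) := ruleEmb embEH P

/-! ## Grounding and stable models -/

/-- The grounding of `P`: all ground instantiations of rules of `P`
obtained by replacing variables with names of `Σ_P`. -/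
def grP {S : Sig} (P : Program S) : Program S :=
  {r' | ∃ r ∈ P, ∃ σ : ℕ → Term S,
        (∀ x, r.hasVar x → (σ x).isNameOf (progFuncs P)) ∧ r' = Rule.applySubst σ r}

/-- A Herbrand interpretation: a set of ground atomic formulas. -/
def HerbrandI {S : Sig} (M : Set (Formula S)) : Prop :=
  ∀ φ ∈ M, φ.isAtomic ∧ φ.isGround

/-- `M` is a Herbrand model of the positive ground program `Q` (relative to the
names of `Σ_P`): rules are satisfied and `t = t ∈ M` for every name `t`. -/
def HerbrandModelOf {S : Sig} (P Q : Program S) (M : Set (Formula S)) : Prop :=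
  HerbrandI M ∧
  (∀ r ∈ Q, (∀ b ∈ r.pos, PAtom.toFormula b ∈ M) → ∃ h ∈ r.head, PAtom.toFormula h ∈ M) ∧
  (∀ t : Term S, t.isNameOf (progFuncs P) → Formula.eq t t ∈ M)

/-- The Gelfond–Lifschitz reduct of `gr(P)` with respect to `M`. -/
def reduct {S : Sig} (P : Program S) (M : Set (Formula S)) : Program S :=
  {r' | ∃ r ∈ grP P, (∀ c ∈ r.neg, PAtom.toFormula c ∉ M) ∧
        r' = ⟨r.head, r.pos, [], r.vars⟩}

/-- `M` is a stable model of `P`: a minimal Herbrand model of the reduct of `gr(P)` w.r.t. `M`. -/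
def isStableModel {S : Sig} (P : Program S) (M : Set (Formula S)) : Prop :=
  HerbrandModelOf P (reduct P M) M ∧
  ∀ M', M' ⊆ M → HerbrandModelOf P (reduct P M) M' → M' = M

/-! ## First-order theories and classes thereof -/

/-- An FO theory: a set of objective sentences. -/
def FOTheory {S : Sig} (Φ : Set (Formula S)) : Prop :=
  ∀ φ ∈ Φ, φ.isObjective ∧ φ.closed

def theoryFuncs {S : Sig} (Φ : Set (Formula S)) : Set S.Func := {f | ∃ φ ∈ Φ, f ∈ φ.funcs}
def theoryPreds {S : Sig} (Φ : Set (Formula S)) : Set S.Pred := {q | ∃ φ ∈ Φ, q ∈ φ.preds}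

/-- The ambient signature is exactly the union of the signatures of `Φ` and `P`. -/
def CoverSig {S : Sig} (Φ : Set (Formula S)) (P : Program S) : Prop :=
  (∀ f : S.Func, f ∈ theoryFuncs Φ ∪ progFuncs P) ∧
  (∀ q : S.Pred, q ∈ theoryPreds Φ ∪ progPreds P)

def exClosure {S : Sig} (ys : List ℕ) (φ : Formula S) : Formula S := ys.foldr Formula.ex φ

/-- A Horn sentence `(∀)(b₁ ∧ … ∧ b_n ⊃ h)` with atomic `b_i`, `h`
(the consequent `h` may be absent). -/
def isHornSentence {S : Sig} (φ : Formula S) : Prop :=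
  ∃ (vs : List ℕ) (bs : List (Formula S)),
    (∀ b ∈ bs, b.isAtomic) ∧
    ((∃ h : Formula S, h.isAtomic ∧ φ = uclosure vs (impOf bs h)) ∨
     (∃ b rest, bs = b :: rest ∧ φ = uclosure vs (Formula.not (andAll b rest))))

def HornTheory {S : Sig} (Φ : Set (Formula S)) : Prop :=
  FOTheory Φ ∧ ∀ φ ∈ Φ, isHornSentence φ

/-- A generalized Horn sentence `(∀)(b₁ ∧ … ∧ b_n ⊃ ∃ȳ.h)` with atomic `b_i`, `h`,
the variables `ȳ` occurring only in `h` (the consequent may be absent). -/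
def isGHornSentence {S : Sig} (φ : Formula S) : Prop :=
  ∃ (vs : List ℕ) (bs : List (Formula S)),
    (∀ b ∈ bs, b.isAtomic) ∧
    ((∃ (ys : List ℕ) (h : Formula S), h.isAtomic ∧
        (∀ y ∈ ys, ∀ b ∈ bs, ¬ b.freeIn y) ∧
        φ = uclosure vs (impOf bs (exClosure ys h))) ∨
     (∃ b rest, bs = b :: rest ∧ φ = uclosure vs (Formula.not (andAll b rest))))

def GHornTheory {S : Sig} (Φ : Set (Formula S)) : Prop :=
  FOTheory Φ ∧ ∀ φ ∈ Φ, isGHornSentence φ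

def PropTheory {S : Sig} (Φ : Set (Formula S)) : Prop :=
  FOTheory Φ ∧ ∀ φ ∈ Φ, φ.isPropositional

/-!
For a class `W` of interpretations, the formulas true throughout `W` form a unique belief set `T`
once `𝖫` is read as membership in `T`: the truth of `𝖫φ` only depends on formulas of smaller modal
depth. If `W` is exactly the class of models of `Φ` relative to `T`, then `T` is a stable expansion
of `Φ`, so one interpretation in `W` refuting `φ` shows that `φ` is not a consequence of `Φ`.

Over one constant `c`, the atom `𝖫p(x)` says that `x` is `c` and `p(c)` is believed. Therefore

* `p(x) ←` and `p(c) ←` entail `∀x. x = c` under `τ^∨_EH`, but not under `τ^∨_HP`;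
* `p(c) ← p(c)` says nothing under `τ_HP`, while under `τ^∨_EB` the atom `p(c)` is never believed,
  so that introspection `p(c) ⊃ 𝖫p(c)` makes it false;
* `q(x) ← p(x)` and `p(c) ←` entail `∀x. p(x) ⊃ q(x)` under `τ_HP`, but under `τ^∨_EB` an unnamed
  individual may satisfy `p` without satisfying `q`.
-/

namespace Term

variable {S : Sig} {t : Term S}

theorem not_hasVar_of_isGround (ht : t.isGround) (x : ℕ) : ¬ t.hasVar x := by
  induction t with
  | var _ => exact ht.elim
  | func _ _ ih => exact fun ⟨i, hi⟩ => ih i (ht i) hi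

theorem isGround_of_isNameOf {F : Set S.Func} (ht : t.isNameOf F) : t.isGround := by
  induction t with
  | var _ => exact ht
  | func _ _ ih => exact fun i => ih i (ht.2 i)

theorem subst_eq_self {β : ℕ → Option (Term S)} (h : ∀ x, t.hasVar x → β x = none) :
    t.subst β = t := by
  induction t with
  | var x => simp only [subst, h x rfl, Option.getD_none]
  | func f ts ih => exact congrArg (func f) (funext fun i => ih i fun x hx => h x ⟨i, hx⟩)

theorem eval_eq_evalG (ht : t.isGround) (w : Interp S) (B : ℕ → w.U) :
    t.eval w B = t.evalG w := by
  induction t with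
  | var _ => exact ht.elim
  | func f _ ih => exact congrArg (w.interpF f) (funext fun i => ih i (ht i))

end Term

namespace Formula

variable {S : Sig} {φ : Formula S}

/-- The modal depth of a formula: the maximal nesting of `𝖫`. -/
def modalDepth : Formula S → ℕ
  | atom _ _ => 0
  | eq _ _ => 0
  | not φ => φ.modalDepth
  | and φ ψ => max φ.modalDepth ψ.modalDepth
  | ex _ φ => φ.modalDepth
  | box φ => φ.modalDepth + 1

theorem modalDepth_subst (φ : Formula S) (β : ℕ → Option (Term S)) :
    (φ.subst β).modalDepth = φ.modalDepth := by
  induction φ generalizing β with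
  | atom _ _ | eq _ _ => rfl
  | not _ ih | ex _ _ ih => exact ih _
  | and _ _ ihφ ihψ => exact congrArg₂ max (ihφ β) (ihψ β)
  | box _ ih => exact congrArg (· + 1) (ih β)

theorem subst_eq_self {β : ℕ → Option (Term S)} (h : ∀ x, φ.freeIn x → β x = none) :
    φ.subst β = φ := by
  induction φ generalizing β with
  | atom p ts =>
    exact congrArg (atom p) (funext fun i => Term.subst_eq_self fun x hx => h x ⟨i, hx⟩)
  | eq t₁ t₂ =>
    exact congrArg₂ eq (Term.subst_eq_self fun x hx => h x (.inl hx))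
      (Term.subst_eq_self fun x hx => h x (.inr hx))
  | not _ ih => exact congrArg not (ih h)
  | and _ _ ihφ ihψ =>
    exact congrArg₂ and (ihφ fun x hx => h x (.inl hx)) (ihψ fun x hx => h x (.inr hx))
  | ex y _ ih =>
    refine congrArg (ex y) (ih fun x hx => ?_)
    by_cases hxy : x = y
    · exact if_pos hxy
    · exact (if_neg hxy).trans (h x ⟨hxy, hx⟩)
  | box _ ih => exact congrArg box (ih h)

end Formula

theorem PAtom.closed_toFormula {S : Sig} {a : PAtom S} (ha : a.isGround) : a.toFormula.closed :=
  fun x ⟨i, hi⟩ => Term.not_hasVar_of_isGround (ha i) x hi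

instance Interp.instNonemptyU {S : Sig} (w : Interp S) : Nonempty w.U := w.nonempty

namespace Assoc

variable {S : Sig} {w : Interp S} {B : ℕ → w.U} {β : ℕ → Option (Term S)}

theorem exists_assoc (w : Interp S) (B : ℕ → w.U) : ∃ β, Assoc w B β := by
  classical
  refine ⟨fun x => if h : IsNamed w (B x) then some h.choose else none, fun x => ⟨?_, ?_⟩⟩
  · intro h
    simp only [dif_pos h, Option.isSome_some]
  · intro t ht
    obtain ⟨h, ht⟩ := Option.dite_none_right_eq_some.1 ht
    obtain rfl := Option.some.inj ht
    exact h.choose_spec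

theorem eq_none (hβ : Assoc w B β) {x : ℕ} (hx : ¬ IsNamed w (B x)) : β x = none :=
  Option.eq_none_iff_forall_ne_some.2 fun t ht => hx ⟨t, (hβ x).2 t ht⟩

theorem exists_eq_some (hβ : Assoc w B β) {x : ℕ} (hx : IsNamed w (B x)) :
    ∃ t, β x = some t ∧ t.isGround := by
  obtain ⟨t, ht⟩ := Option.isSome_iff_exists.1 ((hβ x).1 hx)
  exact ⟨t, ht, ((hβ x).2 t ht).1⟩

end Assoc

section Satisfaction

variable {S : Sig} {X : Sem} {w : Interp S} {Γ Δ : Set (Formula S)} {φ ψ : Formula S}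
  {B : ℕ → w.U}

theorem sat_and : Sat X w Γ (.and φ ψ) B ↔ Sat X w Γ φ B ∧ Sat X w Γ ψ B :=
  Iff.rfl

theorem sat_imp : Sat X w Γ (.imp φ ψ) B ↔ (Sat X w Γ φ B → Sat X w Γ ψ B) := by
  simp only [Formula.imp, Sat, not_and, not_not]

theorem sat_all {x : ℕ} :
    Sat X w Γ (.all x φ) B ↔ ∀ u, Sat X w Γ φ (Function.update B x u) := by
  simp only [Formula.all, Sat, not_exists, not_not]

theorem sat_box_iff_of_subst_eq (h : ∀ β, Assoc w B β → φ.subst β = ψ) :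
    Sat X w Γ (.box φ) B ↔ ψ.closed ∧ ψ ∈ Γ := by
  obtain ⟨β₀, hβ₀⟩ := Assoc.exists_assoc w B
  cases X with
  | any =>
    constructor
    · rintro ⟨β, hβ, hmem⟩
      rwa [h β hβ] at hmem
    · exact fun hψ => ⟨β₀, hβ₀, by rwa [h β₀ hβ₀]⟩
  | all =>
    constructor
    · intro hall
      simpa only [h β₀ hβ₀] using hall β₀ hβ₀
    · intro hψ β hβ
      rwa [h β hβ]

theorem sat_box_iff_mem (hφ : φ.closed) : Sat X w Γ (.box φ) B ↔ φ ∈ Γ :=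
  (sat_box_iff_of_subst_eq fun _ _ => Formula.subst_eq_self fun x hx => (hφ x hx).elim).trans
    (and_iff_right hφ)

theorem sat_congr (h : ∀ ψ : Formula S, ψ.modalDepth < φ.modalDepth → (ψ ∈ Γ ↔ ψ ∈ Δ))
    (B : ℕ → w.U) : Sat X w Γ φ B ↔ Sat X w Δ φ B := by
  induction φ generalizing B with
  | atom _ _ | eq _ _ => rfl
  | not _ ih => exact not_congr (ih h B)
  | and _ _ ihφ ihψ =>
    exact and_congr (ihφ (fun χ hχ => h χ (lt_max_of_lt_left hχ)) B)
      (ihψ (fun χ hχ => h χ (lt_max_of_lt_right hχ)) B)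
  | ex _ _ ih => exact exists_congr fun _ => ih h _
  | box φ ih =>
    have hsubst (β) : φ.subst β ∈ Γ ↔ φ.subst β ∈ Δ :=
      h _ ((φ.modalDepth_subst β).trans_lt (Nat.lt_succ_self _))
    cases X <;> simp only [Sat, hsubst]

theorem modelsT_union {Φ Ψ : Set (Formula S)} :
    ModelsT X w Γ (Φ ∪ Ψ) ↔ ModelsT X w Γ Φ ∧ ModelsT X w Γ Ψ := by
  simp only [ModelsT, Set.mem_union, or_imp, forall_and]

theorem modelsT_ruleEmb {emb : Rule S → Formula S} {P : Program S} :
    ModelsT X w Γ (ruleEmb emb P) ↔ ∀ r ∈ P, ModelsF X w Γ (emb r) :=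
  ⟨fun h r hr => h _ ⟨r, hr, rfl⟩, fun h _ ⟨r, hr, hφ⟩ => hφ ▸ h r hr⟩

theorem modelsT_PIAax {P : Program S} :
    ModelsT X w Γ (PIAax P) ↔
      ∀ a : PAtom S, a.p ∈ progPreds P → (∀ i, (a.args i).isNameOf (progFuncs P)) →
        ∀ B, Sat X w Γ a.toFormula B → a.toFormula ∈ Γ := by
  have sat_pia (a : PAtom S) (hn : ∀ i, (a.args i).isNameOf (progFuncs P)) (B : ℕ → w.U) :
      Sat X w Γ (.imp a.toFormula (.box a.toFormula)) B ↔
        (Sat X w Γ a.toFormula B → a.toFormula ∈ Γ) := by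
    have hclosed := PAtom.closed_toFormula fun i => Term.isGround_of_isNameOf (hn i)
    rw [sat_imp, sat_box_iff_mem hclosed]
  constructor
  · exact fun h a ha hn B => (sat_pia a hn B).1 (h _ ⟨a, ha, hn, rfl⟩ B)
  · rintro h _ ⟨a, ha, hn, rfl⟩ B
    exact (sat_pia a hn B).2 (h a ha hn B)

end Satisfaction

section Expansions

variable {S : Sig} {X : Sem} {W : Set (Interp S)} {Φ T : Set (Formula S)} {φ : Formula S}

/-- `φ` holds throughout the class `W` of interpretations, where `𝖫` ranges over the formulas
believed in the same sense; the recursion is on the modal depth. -/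
def IsBelieved (X : Sem) (W : Set (Interp S)) (φ : Formula S) : Prop :=
  ∀ w ∈ W, ModelsF X w {ψ | ∃ _ : ψ.modalDepth < φ.modalDepth, IsBelieved X W ψ} φ
termination_by φ.modalDepth

/-- The autoepistemic theory of the class `W` of interpretations, i.e. the belief set of an agent
who considers exactly the members of `W` possible. -/
def beliefSet (X : Sem) (W : Set (Interp S)) : Set (Formula S) :=
  {φ | IsBelieved X W φ}

theorem mem_beliefSet : φ ∈ beliefSet X W ↔ ∀ w ∈ W, ModelsF X w (beliefSet X W) φ := by
  change IsBelieved X W φ ↔ _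
  rw [IsBelieved]
  exact forall₂_congr fun w _ => forall_congr' fun B =>
    sat_congr (fun ψ hψ => exists_prop_of_true hψ) B

theorem stableExp_beliefSet (hW : ∀ w, ModelsT X w (beliefSet X W) Φ ↔ w ∈ W) :
    StableExp X Φ (beliefSet X W) :=
  Set.ext fun _ => mem_beliefSet.trans (forall_congr' fun w => imp_congr_left (hW w).symm)

theorem StableExp.mem_iff (hT : StableExp X Φ T) : φ ∈ T ↔ Entails X Φ T φ :=
  Set.ext_iff.1 hT φ

theorem mem_CnO (hφ : φ.isObjective) (h : ∀ T, StableExp X Φ T → Entails X Φ T φ) :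
    φ ∈ CnO X Φ :=
  ⟨fun T hT => hT.mem_iff.2 (h T hT), hφ⟩

theorem notMem_CnO (hW : ∀ w, ModelsT X w (beliefSet X W) Φ ↔ w ∈ W) {w : Interp S} (hw : w ∈ W)
    (hφ : ¬ ModelsF X w (beliefSet X W) φ) : φ ∉ CnO X Φ :=
  fun h => hφ (mem_beliefSet.1 (h.1 _ (stableExp_beliefSet hW)) w hw)

end Expansions

/-- The signature with a single constant and with unary predicate symbols indexed by `A`. -/
abbrev unarySig (A : Type) : Sig := ⟨Unit, A, fun _ => 0, fun _ => 1⟩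

namespace unarySig

variable {A : Type} {X : Sem} {w : Interp (unarySig A)} {Γ : Set (Formula (unarySig A))}
  {P : Program (unarySig A)} {p q : A}

/-- The constant `c`, which is the only name of the signature. -/
def const : Term (unarySig A) := .func () Fin.elim0

/-- The atom `p(t)`. -/
def atom (p : A) (t : Term (unarySig A)) : PAtom (unarySig A) := ⟨p, fun _ => t⟩

/-- The interpretation in which the constant denotes `c` and `p` denotes `R p`. -/
def interp {U : Type} (c : U) (R : A → U → Prop) : Interp (unarySig A) :=
  ⟨U, ⟨c⟩, fun _ _ => c, fun p v => R p (v 0)⟩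

theorem isGround_const : (const : Term (unarySig A)).isGround := fun i => Fin.elim0 i

theorem eq_const_of_isGround {t : Term (unarySig A)} (ht : t.isGround) : t = const := by
  cases t with
  | var _ => exact ht.elim
  | func _ _ => exact congrArg (Term.func _) (funext fun i : Fin 0 => i.elim0)

theorem isNamed_iff {k : w.U} : IsNamed w k ↔ k = const.evalG w :=
  ⟨fun ⟨_, ht, hk⟩ => hk ▸ congrArg (Term.evalG w) (eq_const_of_isGround ht),
    fun hk => ⟨const, isGround_const, hk.symm⟩⟩

theorem closed_atom_const : (atom p const).toFormula.closed :=
  PAtom.closed_toFormula fun _ => isGround_const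

theorem sat_atom_var {x : ℕ} {B : ℕ → w.U} :
    Sat X w Γ (atom p (.var x)).toFormula B ↔ w.interpP p fun _ => B x :=
  Iff.rfl

theorem sat_atom_const {B : ℕ → w.U} :
    Sat X w Γ (atom p const).toFormula B ↔ w.interpP p fun _ => const.evalG w := by
  rw [← Term.eval_eq_evalG isGround_const w B]
  rfl

theorem modelsF_atom_const :
    ModelsF X w Γ (atom p const).toFormula ↔ w.interpP p fun _ => const.evalG w := by
  simp only [ModelsF, sat_atom_const, forall_const]

theorem sat_box_atom_var {x : ℕ} {B : ℕ → w.U} :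
    Sat X w Γ (.box (atom p (.var x)).toFormula) B ↔
      B x = const.evalG w ∧ (atom p const).toFormula ∈ Γ := by
  by_cases hx : IsNamed w (B x)
  · have hsubst (β) (hβ : Assoc w B β) :
        (atom p (.var x)).toFormula.subst β = (atom p const).toFormula := by
      obtain ⟨t, ht, hground⟩ := hβ.exists_eq_some hx
      simp only [atom, PAtom.toFormula, Formula.subst, Term.subst, ht, Option.getD_some,
        eq_const_of_isGround hground]
    rw [sat_box_iff_of_subst_eq hsubst, and_iff_right closed_atom_const,
      and_iff_right (isNamed_iff.1 hx)]
  · have hsubst (β) (hβ : Assoc w B β) :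
        (atom p (.var x)).toFormula.subst β = (atom p (.var x)).toFormula := by
      simp only [atom, PAtom.toFormula, Formula.subst, Term.subst, hβ.eq_none hx, Option.getD_none]
    have hopen : ¬ (atom p (.var x)).toFormula.closed := fun h => h x ⟨0, rfl⟩
    rw [sat_box_iff_of_subst_eq hsubst, ← isNamed_iff]
    exact iff_of_false (fun h => hopen h.1) fun h => hx h.1

theorem atom_const_mem_beliefSet {W : Set (Interp (unarySig A))}
    (h : ∀ w ∈ W, w.interpP p fun _ => const.evalG w) :
    (atom p const).toFormula ∈ beliefSet X W :=
  mem_beliefSet.2 fun w hw => modelsF_atom_const.2 (h w hw)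

theorem modelsT_UNAax : ModelsT X w Γ (UNAax P) := by
  rintro _ ⟨t₁, t₂, h₁, h₂, hne, _⟩
  have eq_const {t : Term (unarySig A)} (ht : t.isNameOf (progFuncs P)) : t = const :=
    eq_const_of_isGround (Term.isGround_of_isNameOf ht)
  exact (hne ((eq_const h₁).trans (eq_const h₂).symm)).elim

theorem modelsT_PIAax_iff (hP : fullSig P) :
    ModelsT X w Γ (PIAax P) ↔
      ∀ p, (w.interpP p fun _ => const.evalG w) → (atom p const).toFormula ∈ Γ := by
  rw [modelsT_PIAax]
  constructor
  · intro h p hp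
    exact h (atom p const) (hP.2 p) (fun _ => ⟨hP.1 (), fun i => i.elim0⟩) (fun _ => w.dflt)
      (sat_atom_const.2 hp)
  · rintro h ⟨p, args⟩ - hn B hsat
    obtain rfl : args = fun _ => const :=
      funext fun i => eq_const_of_isGround (Term.isGround_of_isNameOf (hn i))
    exact h p (sat_atom_const.1 hsat)

theorem modelsT_ruleEmb_union_UNAax {emb : Rule (unarySig A) → Formula (unarySig A)} :
    ModelsT X w Γ (ruleEmb emb P ∪ UNAax P) ↔ ∀ r ∈ P, ModelsF X w Γ (emb r) := by
  rw [modelsT_union, modelsT_ruleEmb, and_iff_left modelsT_UNAax]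

theorem modelsT_ruleEmb_union_PIAax_union_UNAax {emb : Rule (unarySig A) → Formula (unarySig A)}
    (hP : fullSig P) :
    ModelsT X w Γ (ruleEmb emb P ∪ PIAax P ∪ UNAax P) ↔
      (∀ r ∈ P, ModelsF X w Γ (emb r)) ∧
        ∀ p, (w.interpP p fun _ => const.evalG w) → (atom p const).toFormula ∈ Γ := by
  rw [modelsT_union, modelsT_union, modelsT_ruleEmb, modelsT_PIAax_iff hP,
    and_iff_left modelsT_UNAax]

/-- The rule `p(c) ←`. -/
def fact (p : A) : Rule (unarySig A) := ⟨[atom p const], [], [], []⟩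

/-- The unsafe rule `p(x) ←`. -/
def openFact (p : A) : Rule (unarySig A) := ⟨[atom p (.var 0)], [], [], [0]⟩

/-- The rule `p(c) ← p(c)`. -/
def loop (p : A) : Rule (unarySig A) := ⟨[atom p const], [atom p const], [], []⟩

/-- The rule `q(x) ← p(x)`. -/
def inclusion (p q : A) : Rule (unarySig A) := ⟨[atom q (.var 0)], [atom p (.var 0)], [], [0]⟩

theorem modelsF_embHP_fact :
    ModelsF X w Γ (embHP (fact p)) ↔ w.interpP p fun _ => const.evalG w :=
  modelsF_atom_const

theorem modelsF_embEB_fact :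
    ModelsF X w Γ (embEB (fact p)) ↔ w.interpP p fun _ => const.evalG w :=
  modelsF_atom_const

theorem modelsF_embHP_openFact :
    ModelsF X w Γ (embHP (openFact p)) ↔ ∀ u, w.interpP p fun _ => u := by
  have hemb : embHP (openFact p) = .all 0 (atom p (.var 0)).toFormula := rfl
  simp only [hemb, ModelsF, sat_all, sat_atom_var, Function.update_self, forall_const]

theorem modelsF_embEH_openFact :
    ModelsF X w Γ (embEH (openFact p)) ↔
      ∀ u, (w.interpP p fun _ => u) ∧ u = const.evalG w ∧ (atom p const).toFormula ∈ Γ := by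
  have hemb : embEH (openFact p) =
      .all 0 (.and (atom p (.var 0)).toFormula (.box (atom p (.var 0)).toFormula)) := rfl
  simp only [hemb, ModelsF, sat_all, sat_and, sat_atom_var, sat_box_atom_var, Function.update_self,
    forall_const]

theorem modelsF_embHP_loop : ModelsF X w Γ (embHP (loop p)) :=
  fun _ => sat_imp.2 id

theorem modelsF_embEB_loop : ModelsF X w Γ (embEB (loop p)) :=
  fun _ => sat_imp.2 And.left

theorem modelsF_embHP_inclusion :
    ModelsF X w Γ (embHP (inclusion p q)) ↔
      ∀ u, (w.interpP p fun _ => u) → w.interpP q fun _ => u := by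
  have hemb : embHP (inclusion p q) =
      .all 0 (.imp (atom p (.var 0)).toFormula (atom q (.var 0)).toFormula) := rfl
  simp only [hemb, ModelsF, sat_all, sat_imp, sat_atom_var, Function.update_self, forall_const]

theorem modelsF_embEB_inclusion (hp : (atom p const).toFormula ∈ Γ) :
    ModelsF X w Γ (embEB (inclusion p q)) ↔
      ((w.interpP p fun _ => const.evalG w) → w.interpP q fun _ => const.evalG w) := by
  have hemb : embEB (inclusion p q) =
      .all 0 (.imp (.and (atom p (.var 0)).toFormula (.box (atom p (.var 0)).toFormula))
        (atom q (.var 0)).toFormula) := rfl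
  simp only [hemb, ModelsF, sat_all, sat_imp, sat_and, sat_atom_var, sat_box_atom_var,
    Function.update_self, forall_const, and_iff_left hp, and_imp]
  exact ⟨fun h hpc => h _ hpc rfl, fun h u hpu hu => hu ▸ h (hu ▸ hpu)⟩

theorem wf_fact : (fact p).wf := by
  simp [Rule.wf, fact, Rule.hasVar, Rule.atoms, PAtom.hasVar, atom, const, Term.hasVar]

theorem wf_openFact : (openFact p).wf := by
  simp [Rule.wf, openFact, Rule.hasVar, Rule.atoms, PAtom.hasVar, atom, Term.hasVar, eq_comm]

theorem wf_loop : (loop p).wf := by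
  simp [Rule.wf, loop, Rule.hasVar, Rule.atoms, PAtom.hasVar, atom, const, Term.hasVar]

theorem wf_inclusion : (inclusion p q).wf := by
  simp [Rule.wf, inclusion, Rule.hasVar, Rule.atoms, PAtom.hasVar, atom, Term.hasVar, eq_comm]

theorem isSafe_fact : (fact p).isSafe := by
  simp [Rule.isSafe, fact, Rule.hasVar, Rule.atoms, PAtom.hasVar, atom, const, Term.hasVar]

theorem isSafe_loop : (loop p).isSafe := by
  simp [Rule.isSafe, loop, Rule.hasVar, Rule.atoms, PAtom.hasVar, atom, const, Term.hasVar]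

theorem isSafe_inclusion : (inclusion p q).isSafe := by
  simp [Rule.isSafe, inclusion, Rule.hasVar, Rule.atoms, PAtom.hasVar, atom, Term.hasVar]

theorem fullSig_of_mem_atoms {r : Rule (unarySig A)} (hr : r ∈ P) (hp : atom p const ∈ r.atoms)
    (hpreds : ∀ q, q ∈ progPreds P) : fullSig P :=
  ⟨fun _ => ⟨r, hr, _, hp, Set.mem_iUnion.2 ⟨0, Set.mem_insert _ _⟩⟩, hpreds⟩

theorem goodSig_of_fullSig (hP : fullSig P) : goodSig P :=
  fun _ => ⟨(), hP.1 (), rfl⟩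

/-- The program `p(x) ←`, `p(c) ←`. -/
def openProgram : Program (unarySig Unit) := {openFact (), fact ()}

theorem progWf_openProgram : progWf openProgram := by
  rintro r (rfl | rfl)
  exacts [wf_openFact, wf_fact]

theorem fullSig_openProgram : fullSig openProgram :=
  fullSig_of_mem_atoms (.inr rfl) (.head _) fun _ => ⟨fact (), .inr rfl, _, .head _, rfl⟩

/-- The sentence `∀x. x = c`. -/
def allEqConst : Formula (unarySig A) := .all 0 (.eq (.var 0) const)

theorem modelsF_allEqConst : ModelsF X w Γ allEqConst ↔ ∀ u : w.U, u = const.evalG w := by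
  simp only [allEqConst, ModelsF, sat_all, Sat, Term.eval, Function.update_self,
    Term.eval_eq_evalG isGround_const, forall_const]

theorem allEqConst_mem_CnO_tauEHv : allEqConst ∈ CnO X (tauEHv openProgram) := by
  refine mem_CnO trivial fun T _ w hw => modelsF_allEqConst.2 fun u => ?_
  have hopen := modelsT_ruleEmb_union_UNAax.1 hw (openFact ()) (.inl rfl)
  exact (modelsF_embEH_openFact.1 hopen u).2.1

theorem allEqConst_notMem_CnO_tauHPv : allEqConst ∉ CnO X (tauHPv openProgram) := by
  let W : Set (Interp (unarySig Unit)) := {w | ∀ u, w.interpP () fun _ => u}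
  have hmem (p : Unit) : (atom p const).toFormula ∈ beliefSet X W :=
    atom_const_mem_beliefSet fun _ hw => hw _
  have hW (w) : ModelsT X w (beliefSet X W) (tauHPv openProgram) ↔ w ∈ W := by
    rw [tauHPv, modelsT_ruleEmb_union_PIAax_union_UNAax fullSig_openProgram]
    constructor
    · exact fun h => modelsF_embHP_openFact.1 (h.1 _ (.inl rfl))
    · refine fun hw => ⟨?_, fun p _ => hmem p⟩
      rintro r (rfl | rfl)
      exacts [modelsF_embHP_openFact.2 hw, modelsF_embHP_fact.2 (hw _)]
  refine notMem_CnO hW (w := interp true fun _ _ => True) (fun _ => trivial) fun h => ?_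
  exact Bool.false_ne_true (modelsF_allEqConst.1 h false)

/-- The program `p(c) ← p(c)`. -/
def loopProgram : Program (unarySig Unit) := {loop ()}

theorem progWf_loopProgram : progWf loopProgram := by
  rintro r rfl
  exact wf_loop

theorem progNormal_loopProgram : progNormal loopProgram := by
  rintro r rfl
  rfl

theorem progSafe_loopProgram : progSafe loopProgram := by
  rintro r rfl
  exact isSafe_loop

theorem fullSig_loopProgram : fullSig loopProgram :=
  fullSig_of_mem_atoms rfl (.head _) fun _ => ⟨loop (), rfl, _, .head _, rfl⟩

theorem not_atom_mem_CnO_tauEBv :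
    (atom () const).toFormula.not ∈ CnO X (tauEBv loopProgram) := by
  refine mem_CnO trivial fun T hT => ?_
  have hmodels (w) : ModelsT X w T (tauEBv loopProgram) ↔
      ∀ p, (w.interpP p fun _ => const.evalG w) → (atom p const).toFormula ∈ T := by
    rw [tauEBv, modelsT_ruleEmb_union_PIAax_union_UNAax fullSig_loopProgram, and_iff_right]
    rintro r rfl
    exact modelsF_embEB_loop
  have hnot_mem : (atom () const).toFormula ∉ T := fun hmem =>
    modelsF_atom_const.1 (hT.mem_iff.1 hmem (interp () fun _ _ => False)
      ((hmodels _).2 fun _ h => h.elim))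
  exact fun w hw B h => hnot_mem ((hmodels w).1 hw () (sat_atom_const.1 h))

theorem not_atom_notMem_CnO_tauHP :
    (atom () const).toFormula.not ∉ CnO X (tauHP loopProgram) := by
  have hW (w) : ModelsT X w (beliefSet X Set.univ) (tauHP loopProgram) ↔ w ∈ Set.univ := by
    rw [tauHP, modelsT_ruleEmb_union_UNAax]
    refine iff_of_true ?_ (Set.mem_univ w)
    rintro r rfl
    exact modelsF_embHP_loop
  exact notMem_CnO hW (w := interp () fun _ _ => True) (Set.mem_univ _) fun h =>
    h (fun _ => ()) trivial

/-- The program `q(x) ← p(x)`, `p(c) ←`, where `p` is `true` and `q` is `false`. -/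
def inclusionProgram : Program (unarySig Bool) := {inclusion true false, fact true}

theorem progWf_inclusionProgram : progWf inclusionProgram := by
  rintro r (rfl | rfl)
  exacts [wf_inclusion, wf_fact]

theorem progNormal_inclusionProgram : progNormal inclusionProgram := by
  rintro r (rfl | rfl) <;> rfl

theorem progSafe_inclusionProgram : progSafe inclusionProgram := by
  rintro r (rfl | rfl)
  exacts [isSafe_inclusion, isSafe_fact]

theorem fullSig_inclusionProgram : fullSig inclusionProgram := by
  refine fullSig_of_mem_atoms (.inr rfl) (.head _) fun p => ?_
  cases p with
  | false => exact ⟨inclusion true false, .inl rfl, _, .head _, rfl⟩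
  | true => exact ⟨fact true, .inr rfl, _, .head _, rfl⟩

theorem embHP_inclusion_mem_CnO_tauHP :
    embHP (inclusion true false) ∈ CnO X (tauHP inclusionProgram) :=
  mem_CnO ⟨trivial, trivial⟩ fun _ _ _ hw => modelsT_ruleEmb_union_UNAax.1 hw _ (.inl rfl)

theorem embHP_inclusion_notMem_CnO_tauEBv :
    embHP (inclusion true false) ∉ CnO X (tauEBv inclusionProgram) := by
  let W : Set (Interp (unarySig Bool)) := {w | ∀ p, w.interpP p fun _ => const.evalG w}
  have hmem (p : Bool) : (atom p const).toFormula ∈ beliefSet X W :=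
    atom_const_mem_beliefSet fun _ hw => hw p
  have hW (w) : ModelsT X w (beliefSet X W) (tauEBv inclusionProgram) ↔ w ∈ W := by
    rw [tauEBv, modelsT_ruleEmb_union_PIAax_union_UNAax fullSig_inclusionProgram]
    constructor
    · rintro ⟨hrules, -⟩
      have htrue := modelsF_embEB_fact.1 (hrules _ (.inr rfl))
      have hfalse := (modelsF_embEB_inclusion (hmem true)).1 (hrules _ (.inl rfl)) htrue
      exact Bool.forall_bool.2 ⟨hfalse, htrue⟩
    · refine fun hw => ⟨?_, fun p _ => hmem p⟩
      rintro r (rfl | rfl)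
      exacts [(modelsF_embEB_inclusion (hmem true)).2 fun _ => hw false,
        modelsF_embEB_fact.2 (hw true)]
  -- The individual `false` is unnamed; it satisfies the predicate `true` only.
  let w : Interp (unarySig Bool) := interp true fun p u => p = true ∨ u = true
  refine notMem_CnO hW (w := w) (fun _ => .inr rfl) fun h => ?_
  have hfalse : false = true ∨ false = true := modelsF_embHP_inclusion.1 h false (.inl rfl)
  exact Bool.false_ne_true (or_self_iff.1 hfalse)

end unarySig

/-- Failing inclusions: there are programs witnessing
`Cnˣ_o(τ^∨_EH(P)) ⊄ Cnˣ_o(τ^∨_HP(P))` (disjunctive `P`),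
`Cnˣ_o(τ^∨_EB(P)) ⊄ Cnˣ_o(τ_HP(P))` (safe normal `P`), and
`Cnˣ_o(τ_HP(P)) ⊄ Cnˣ_o(τ^∨_EB(P))` (safe normal `P`). -/
theorem stmt12 (X : Sem) :
    (∃ (S : Sig) (P : Program S), progWf P ∧ fullSig P ∧ goodSig P ∧
        ¬ CnO X (tauEHv P) ⊆ CnO X (tauHPv P)) ∧
    (∃ (S : Sig) (P : Program S), progWf P ∧ progNormal P ∧ progSafe P ∧
        fullSig P ∧ goodSig P ∧
        ¬ CnO X (tauEBv P) ⊆ CnO X (tauHP P)) ∧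
    (∃ (S : Sig) (P : Program S), progWf P ∧ progNormal P ∧ progSafe P ∧
        fullSig P ∧ goodSig P ∧
        ¬ CnO X (tauHP P) ⊆ CnO X (tauEBv P)) := by
  open unarySig in
  exact
    ⟨⟨_, openProgram, progWf_openProgram, fullSig_openProgram,
        goodSig_of_fullSig fullSig_openProgram,
        fun h => allEqConst_notMem_CnO_tauHPv (h allEqConst_mem_CnO_tauEHv)⟩,
      ⟨_, loopProgram, progWf_loopProgram, progNormal_loopProgram, progSafe_loopProgram,
        fullSig_loopProgram, goodSig_of_fullSig fullSig_loopProgram,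
        fun h => not_atom_notMem_CnO_tauHP (h not_atom_mem_CnO_tauEBv)⟩,
      ⟨_, inclusionProgram, progWf_inclusionProgram, progNormal_inclusionProgram,
        progSafe_inclusionProgram, fullSig_inclusionProgram,
        goodSig_of_fullSig fullSig_inclusionProgram,
        fun h => embHP_inclusion_notMem_CnO_tauEBv (h embHP_inclusion_mem_CnO_tauHP)⟩⟩
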